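/- arXiv:0907.2594 — 2 statements merged into one kernel-verified Lean document; each statement's English description precedes it below -/
import Mathlib

section
/- For every integer n ≥ 1 there exists a smooth compactly supported function η : ℝⁿ → ℝ such that ∫_{ℝⁿ} ( ‖∇η(x)‖² − (1/2) η(x)² ) · exp(−‖x‖²/4) dx < 0. In fact, one may take η ≡ 1 on the ball of radius R about the origin, η ≡ 0 outside the ball of radius R+1, and 0 ≤ η ≤ 1 with |∇η| ≤ 2 in between, for any sufficiently large R. -/
open MeasureTheory Filter

/-!
The constant function `1` makes `∫ (‖∇η‖² - c η²) dμ` negative for every nonzero finite measure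
`μ` and every `c > 0`. Cutting it off between radius `R` and `R + δ` costs at most `C²` times the
mass outside the ball of radius `R`, where `C` bounds the gradient, and this mass tends to `0` as
`R → ∞`.
-/

open Set Metric Topology
open scoped NNReal Gradient ContDiff

section SmoothCutoff

theorem hasDerivAt_integral_Ioi {F : Type*} [NormedAddCommGroup F] [NormedSpace ℝ F]
    [CompleteSpace F] {f : ℝ → F} (hint : Integrable f) (hcont : Continuous f) (t : ℝ) :
    HasDerivAt (fun u ↦ ∫ s in Ioi u, f s) (-f t) t := by
  have tail_eq (u : ℝ) : ∫ s in Ioi u, f s = (∫ s in Ioi 0, f s) - ∫ s in 0..u, f s := by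
    rw [← intervalIntegral.integral_Ioi_sub_Ioi' hint.integrableOn hint.integrableOn,
      sub_sub_cancel]
  rw [funext tail_eq]
  exact (hcont.integral_hasStrictDerivAt 0 t).hasDerivAt.const_sub _

/-- The mass to the right of `t` of the probability density given by the bump function `f`: a
smooth step descending from `1` to `0` across the support of `f`. -/
noncomputable def bumpTail {c : ℝ} (f : ContDiffBump c) (t : ℝ) : ℝ :=
  ∫ s in Ioi t, f.normed volume s

variable {c : ℝ} (f : ContDiffBump c)

theorem hasDerivAt_bumpTail (t : ℝ) : HasDerivAt (bumpTail f) (-f.normed volume t) t :=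
  hasDerivAt_integral_Ioi f.integrable_normed f.continuous_normed t

theorem deriv_bumpTail : deriv (bumpTail f) = -f.normed volume :=
  funext fun t ↦ (hasDerivAt_bumpTail f t).deriv

theorem differentiable_bumpTail : Differentiable ℝ (bumpTail f) :=
  fun t ↦ (hasDerivAt_bumpTail f t).differentiableAt

theorem contDiff_bumpTail : ContDiff ℝ ∞ (bumpTail f) := by
  rw [contDiff_infty_iff_deriv, deriv_bumpTail]
  exact ⟨differentiable_bumpTail f, f.contDiff_normed.neg⟩

theorem bumpTail_mem_Icc (t : ℝ) : bumpTail f t ∈ Icc 0 1 := by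
  refine ⟨integral_nonneg f.nonneg_normed, ?_⟩
  rw [← f.integral_normed (μ := volume)]
  exact setIntegral_le_integral f.integrable_normed (ae_of_all _ f.nonneg_normed)

theorem bumpTail_of_le {t : ℝ} (ht : t ≤ c - f.rOut) : bumpTail f t = 1 := by
  rw [bumpTail, setIntegral_eq_integral_of_forall_compl_eq_zero, f.integral_normed]
  intro s hs
  rw [← Function.notMem_support, f.support_normed_eq, Real.ball_eq_Ioo]
  exact fun hmem ↦ hs (ht.trans_lt hmem.1)

theorem bumpTail_of_ge {t : ℝ} (ht : c + f.rOut ≤ t) : bumpTail f t = 0 := by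
  refine setIntegral_eq_zero_of_forall_eq_zero fun s hs ↦ ?_
  rw [← Function.notMem_support, f.support_normed_eq, Real.ball_eq_Ioo]
  exact fun hmem ↦ (ht.trans_lt hs).not_gt hmem.2

theorem lipschitzWith_bumpTail {K : ℝ≥0} (hK : 1 / (2 * f.rIn) ≤ K) :
    LipschitzWith K (bumpTail f) := by
  refine lipschitzWith_of_nnnorm_deriv_le (differentiable_bumpTail f) fun t ↦ ?_
  rw [← NNReal.coe_le_coe, coe_nnnorm, deriv_bumpTail, Pi.neg_apply, norm_neg,
    Real.norm_of_nonneg (f.nonneg_normed t)]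
  refine le_trans ?_ hK
  simpa only [Real.volume_real_closedBall f.rIn_pos.le]
    using f.normed_le_div_measure_closedBall_rIn volume t

theorem exists_contDiff_lipschitzWith_cutoff {a b : ℝ} {K : ℝ≥0}
    (hK : 1 < K * (b - a)) :
    ∃ φ : ℝ → ℝ, ContDiff ℝ ∞ φ ∧ (∀ t ≤ a, φ t = 1) ∧ (∀ t, b ≤ t → φ t = 0) ∧
      (∀ t, φ t ∈ Icc 0 1) ∧ LipschitzWith K φ := by
  have K_pos : (0 : ℝ) < K := K.coe_nonneg.lt_of_ne' fun h ↦ by norm_num [h] at hK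
  let f : ContDiffBump ((a + b) / 2) :=
    { rIn := 1 / (2 * K)
      rOut := (b - a) / 2
      rIn_pos := by positivity
      rIn_lt_rOut := by rw [div_lt_div_iff₀ (by positivity) two_pos]; linarith }
  have left_eq : (a + b) / 2 - f.rOut = a := by simp only [f]; ring
  have right_eq : (a + b) / 2 + f.rOut = b := by simp only [f]; ring
  have slope_eq : 1 / (2 * f.rIn) = K := by simp only [f]; field_simp
  exact ⟨bumpTail f, contDiff_bumpTail f, fun t ht ↦ bumpTail_of_le f (ht.trans_eq left_eq.symm),
    fun t ht ↦ bumpTail_of_ge f (right_eq.trans_le ht), bumpTail_mem_Icc f,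
    lipschitzWith_bumpTail f slope_eq.le⟩

end SmoothCutoff

section RadialCutoff

variable {E : Type*} [NormedAddCommGroup E] [InnerProductSpace ℝ E]

theorem contDiff_comp_norm_of_eqOn_const {F : Type*} [NormedAddCommGroup F] [NormedSpace ℝ F]
    {φ : ℝ → F} {a : ℝ} {y : F} {k : WithTop ℕ∞} (hφ : ContDiff ℝ k φ) (ha : 0 < a)
    (hconst : ∀ t ≤ a, φ t = y) :
    ContDiff ℝ k fun x : E ↦ φ ‖x‖ := by
  refine contDiff_iff_contDiffAt.2 fun x ↦ ?_
  rcases eq_or_ne x 0 with rfl | hx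
  · refine contDiffAt_const (c := y) |>.congr_of_eventuallyEq ?_
    filter_upwards [ball_mem_nhds (0 : E) ha] with z hz
    exact hconst _ (mem_ball_zero_iff.1 hz).le
  · exact hφ.contDiffAt.comp x (contDiffAt_norm ℝ hx)

theorem exists_contDiff_lipschitzWith_radial_cutoff {a b : ℝ} {K : ℝ≥0} (ha : 0 < a)
    (hK : 1 < K * (b - a)) :
    ∃ η : E → ℝ, ContDiff ℝ ∞ η ∧ (∀ x, ‖x‖ ≤ a → η x = 1) ∧ (∀ x, b ≤ ‖x‖ → η x = 0) ∧
      (∀ x, η x ∈ Icc 0 1) ∧ LipschitzWith K η := by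
  obtain ⟨φ, hφ, φ_one, φ_zero, φ_mem, φ_lip⟩ := exists_contDiff_lipschitzWith_cutoff hK
  refine ⟨fun x ↦ φ ‖x‖, contDiff_comp_norm_of_eqOn_const hφ ha φ_one, fun x ↦ φ_one ‖x‖,
    fun x ↦ φ_zero ‖x‖, fun x ↦ φ_mem ‖x‖, ?_⟩
  exact mul_one K ▸ φ_lip.comp lipschitzWith_one_norm

end RadialCutoff

section Gradient

variable {E : Type*} [NormedAddCommGroup E] [InnerProductSpace ℝ E] [CompleteSpace E] {η : E → ℝ}

theorem norm_gradient_le_of_lipschitzWith {K : ℝ≥0} (hη : LipschitzWith K η) (x : E) :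
    ‖∇ η x‖ ≤ K := by
  rw [gradient, LinearIsometryEquiv.norm_map]
  exact norm_fderiv_le_of_lipschitz ℝ hη

theorem continuous_gradient (hη : ContDiff ℝ 1 η) : Continuous (∇ η) :=
  (InnerProductSpace.toDual ℝ E).symm.continuous.comp (hη.continuous_fderiv one_ne_zero)

theorem hasCompactSupport_gradient (hη : HasCompactSupport η) : HasCompactSupport (∇ η) :=
  (hη.fderiv (𝕜 := ℝ)).comp_left (map_zero (InnerProductSpace.toDual ℝ E).symm)

theorem gradient_eq_zero_of_eqOn_const {s : Set E} (hs : IsOpen s) {y : ℝ}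
    (hη : ∀ x ∈ s, η x = y) {x : E} (hx : x ∈ s) : ∇ η x = 0 := by
  have hloc : η =ᶠ[𝓝 x] fun _ ↦ y := eventually_of_mem (hs.mem_nhds hx) hη
  rw [hloc.gradient_eq, gradient_fun_const]

end Gradient

theorem tendsto_measureReal_ball_atTop {X : Type*} [PseudoMetricSpace X] [MeasurableSpace X]
    (μ : Measure X) [IsFiniteMeasure μ] (x : X) :
    Tendsto (fun R : ℝ ↦ μ.real (ball x R)) atTop (𝓝 (μ.real univ)) := by
  have union_eq : ⋃ R : ℝ, ball x R = univ :=
    iUnion_eq_univ_iff.2 fun y ↦ ⟨dist y x + 1, mem_ball.2 (lt_add_one _)⟩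
  have hlim := tendsto_measure_iUnion_atTop (μ := μ) fun r R : ℝ ↦ ball_subset_ball (x := x)
  rw [union_eq] at hlim
  exact (ENNReal.tendsto_toReal (measure_ne_top μ univ)).comp hlim

theorem eventually_mul_measureReal_compl_ball_lt {X : Type*} [PseudoMetricSpace X]
    [MeasurableSpace X] [OpensMeasurableSpace X] (μ : Measure X) [IsFiniteMeasure μ] [NeZero μ]
    (x : X) (A : ℝ) {c : ℝ} (hc : 0 < c) :
    ∀ᶠ R : ℝ in atTop, A * μ.real (ball x R)ᶜ < c * μ.real (ball x R) := by
  have inside := tendsto_measureReal_ball_atTop μ x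
  have outside : Tendsto (fun R : ℝ ↦ μ.real (ball x R)ᶜ) atTop (𝓝 0) := by
    simp_rw [measureReal_compl measurableSet_ball]
    simpa only [sub_self] using inside.const_sub (μ.real univ)
  refine (outside.const_mul A).eventually_lt (inside.const_mul c) ?_
  rw [mul_zero]
  exact mul_pos hc measureReal_univ_pos

section StabilityForm

variable {E : Type*} [NormedAddCommGroup E] [InnerProductSpace ℝ E] [CompleteSpace E]
  [MeasurableSpace E]

/-- The quadratic form `∫ (‖∇η‖² - c η²) dμ`. For `c = 1 / 2` and `dμ = exp (-‖x‖² / 4) dx` it is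
the form `-∫ η L η exp (-‖x‖² / 4) dx` of the flat hyperplane, integrated by parts. -/
noncomputable def stabilityForm (μ : Measure E) (c : ℝ) (η : E → ℝ) : ℝ :=
  ∫ x, (‖∇ η x‖ ^ 2 - c * η x ^ 2) ∂μ

variable [OpensMeasurableSpace E] (μ : Measure E) {η : E → ℝ}

theorem integrable_norm_gradient_sq_sub [IsFiniteMeasureOnCompacts μ] (hη : ContDiff ℝ 1 η)
    (hsupp : HasCompactSupport η) (c : ℝ) :
    Integrable (fun x ↦ ‖∇ η x‖ ^ 2 - c * η x ^ 2) μ := by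
  have grad_sq_supp : HasCompactSupport fun x ↦ ‖∇ η x‖ ^ 2 :=
    (hasCompactSupport_gradient hsupp).norm.comp_left (g := (· ^ 2)) (zero_pow two_ne_zero)
  have sq_supp : HasCompactSupport fun x ↦ η x ^ 2 :=
    hsupp.comp_left (g := (· ^ 2)) (zero_pow two_ne_zero)
  have grad_sq_int : Integrable (fun x ↦ ‖∇ η x‖ ^ 2) μ :=
    ((continuous_gradient hη).norm.pow 2).integrable_of_hasCompactSupport grad_sq_supp
  have sq_int : Integrable (fun x ↦ η x ^ 2) μ :=
    (hη.continuous.pow 2).integrable_of_hasCompactSupport sq_supp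
  exact grad_sq_int.sub (sq_int.const_mul c)

theorem stabilityForm_le [IsFiniteMeasure μ] (hη : ContDiff ℝ 1 η) (hsupp : HasCompactSupport η)
    {c C : ℝ} (hc : 0 ≤ c) {s : Set E} (hs : IsOpen s) (h_one : ∀ x ∈ s, η x = 1)
    (h_grad : ∀ x, ‖∇ η x‖ ≤ C) :
    stabilityForm μ c η ≤ C ^ 2 * μ.real sᶜ - c * μ.real s := by
  have hint := integrable_norm_gradient_sq_sub μ hη hsupp c
  have inside : ∫ x in s, (‖∇ η x‖ ^ 2 - c * η x ^ 2) ∂μ = -(c * μ.real s) := by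
    calc ∫ x in s, (‖∇ η x‖ ^ 2 - c * η x ^ 2) ∂μ = ∫ _ in s, -c ∂μ := by
          refine setIntegral_congr_fun hs.measurableSet fun x hx ↦ ?_
          simp [h_one x hx, gradient_eq_zero_of_eqOn_const hs h_one hx]
      _ = -(c * μ.real s) := by rw [setIntegral_const, smul_eq_mul]; ring
  have outside : ∫ x in sᶜ, (‖∇ η x‖ ^ 2 - c * η x ^ 2) ∂μ ≤ C ^ 2 * μ.real sᶜ := by
    calc ∫ x in sᶜ, (‖∇ η x‖ ^ 2 - c * η x ^ 2) ∂μ ≤ ∫ _ in sᶜ, C ^ 2 ∂μ := by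
          refine integral_mono hint.integrableOn (integrable_const _) fun x ↦ ?_
          calc ‖∇ η x‖ ^ 2 - c * η x ^ 2 ≤ ‖∇ η x‖ ^ 2 := sub_le_self _ (by positivity)
            _ ≤ C ^ 2 := by gcongr; exact h_grad x
      _ = C ^ 2 * μ.real sᶜ := by rw [setIntegral_const, smul_eq_mul, mul_comm]
  rw [stabilityForm, ← integral_add_compl hs.measurableSet hint, inside]
  linarith

end StabilityForm

section Gaussian

variable (E : Type*) [NormedAddCommGroup E] [InnerProductSpace ℝ E] [FiniteDimensional ℝ E]
  [MeasurableSpace E] [BorelSpace E]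

theorem integrable_exp_neg_mul_sq_norm {b : ℝ} (hb : 0 < b) :
    Integrable fun x : E ↦ Real.exp (-b * ‖x‖ ^ 2) := by
  refine Integrable.of_integral_ne_zero ?_
  rw [GaussianFourier.integral_rexp_neg_mul_sq_norm hb]
  positivity

/-- The measure `exp (-‖x‖² / 4) dx`, with respect to which the stability of self-shrinkers is
measured. It is not normalized to have mass `1`. -/
noncomputable def shrinkerMeasure : Measure E :=
  volume.withDensity fun x ↦ ENNReal.ofReal (Real.exp (-‖x‖ ^ 2 / 4))

instance isFiniteMeasure_shrinkerMeasure : IsFiniteMeasure (shrinkerMeasure E) := by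
  have exponent_eq (x : E) : -‖x‖ ^ 2 / 4 = -(1 / 4) * ‖x‖ ^ 2 := by ring
  simp_rw [shrinkerMeasure, exponent_eq]
  exact isFiniteMeasure_withDensity_ofReal (integrable_exp_neg_mul_sq_norm E (by norm_num)).2

instance neZero_shrinkerMeasure : NeZero (shrinkerMeasure E) := by
  have volume_ac : (volume : Measure E) ≪ shrinkerMeasure E :=
    withDensity_absolutelyContinuous' (by fun_prop)
      (ae_of_all _ fun x ↦ (ENNReal.ofReal_pos.2 (Real.exp_pos _)).ne')
  exact ⟨fun h ↦ NeZero.ne (volume : Measure E)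
    (Measure.absolutelyContinuous_zero_iff.1 (h ▸ volume_ac))⟩

variable {E}

theorem stabilityForm_shrinkerMeasure (c : ℝ) (η : E → ℝ) :
    stabilityForm (shrinkerMeasure E) c η =
      ∫ x, (‖∇ η x‖ ^ 2 - c * η x ^ 2) * Real.exp (-‖x‖ ^ 2 / 4) := by
  rw [stabilityForm, shrinkerMeasure, integral_withDensity_eq_integral_toReal_smul (by fun_prop)
    (ae_of_all _ fun _ ↦ ENNReal.ofReal_lt_top)]
  simp only [ENNReal.toReal_ofReal (Real.exp_pos _).le, smul_eq_mul, mul_comm]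

end Gaussian

theorem hyperplane_not_L_stable_general {E : Type*} [NormedAddCommGroup E] [InnerProductSpace ℝ E]
    [FiniteDimensional ℝ E] [MeasurableSpace E] [OpensMeasurableSpace E] (μ : Measure E)
    [IsFiniteMeasure μ] [NeZero μ] {c δ C : ℝ} (hc : 0 < c) (hδ : 0 < δ) (hC : 1 < C * δ) :
    (∃ η : E → ℝ, ContDiff ℝ ∞ η ∧ HasCompactSupport η ∧ stabilityForm μ c η < 0) ∧
    (∀ᶠ R : ℝ in atTop, ∃ η : E → ℝ, ContDiff ℝ ∞ η ∧ HasCompactSupport η ∧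
      (∀ x, ‖x‖ ≤ R → η x = 1) ∧ (∀ x, R + δ ≤ ‖x‖ → η x = 0) ∧
      (∀ x, 0 ≤ η x ∧ η x ≤ 1) ∧ (∀ x, ‖∇ η x‖ ≤ C) ∧ stabilityForm μ c η < 0) := by
  refine (and_iff_right_of_imp fun h ↦ ?_).2 ?_
  · obtain ⟨R, η, smooth, compact, -, -, -, -, neg⟩ := h.exists
    exact ⟨η, smooth, compact, neg⟩
  lift C to ℝ≥0 using (pos_of_mul_pos_left (one_pos.trans hC) hδ.le).le
  filter_upwards [eventually_mul_measureReal_compl_ball_lt μ 0 (C ^ 2) hc, eventually_gt_atTop 0]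
    with R tail_lt R_pos
  obtain ⟨η, smooth, η_one, η_zero, η_mem, η_lip⟩ :=
    exists_contDiff_lipschitzWith_radial_cutoff (E := E) (b := R + δ) R_pos
      (by simpa using hC)
  have compact : HasCompactSupport η :=
    .intro (isCompact_closedBall 0 (R + δ)) fun x hx ↦
      η_zero x (not_le.1 (mt mem_closedBall_zero_iff.2 hx)).le
  have grad_le := norm_gradient_le_of_lipschitzWith η_lip
  have form_le := stabilityForm_le μ (smooth.of_le (by simp)) compact hc.le isOpen_ball
    (fun x hx ↦ η_one x (mem_ball_zero_iff.1 hx).le) grad_le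
  exact ⟨η, smooth, compact, η_one, η_zero, η_mem, grad_le, by linarith⟩

/-- The flat hyperplane is not `L`-stable: there is a smooth compactly supported `η : ℝⁿ → ℝ`
with `∫ (‖∇η‖² − (1/2)η²) exp(−‖x‖²/4) < 0`. In fact, for any sufficiently large `R` one may
take `η ≡ 1` on the ball of radius `R`, `η ≡ 0` outside the ball of radius `R + 1`, with
`0 ≤ η ≤ 1` and `‖∇η‖ ≤ 2`. -/
theorem hyperplane_not_L_stable (n : ℕ) (hn : 1 ≤ n) :
    (∃ η : EuclideanSpace ℝ (Fin n) → ℝ, ContDiff ℝ (⊤ : ℕ∞) η ∧ HasCompactSupport η ∧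
      ∫ x, (‖gradient η x‖ ^ 2 - (1 / 2) * η x ^ 2) * Real.exp (-‖x‖ ^ 2 / 4) < 0) ∧
    (∀ᶠ R : ℝ in atTop, ∃ η : EuclideanSpace ℝ (Fin n) → ℝ,
      ContDiff ℝ (⊤ : ℕ∞) η ∧ HasCompactSupport η ∧
      (∀ x, ‖x‖ ≤ R → η x = 1) ∧ (∀ x, R + 1 ≤ ‖x‖ → η x = 0) ∧
      (∀ x, 0 ≤ η x ∧ η x ≤ 1) ∧ (∀ x, ‖gradient η x‖ ≤ 2) ∧
      ∫ x, (‖gradient η x‖ ^ 2 - (1 / 2) * η x ^ 2) * Real.exp (-‖x‖ ^ 2 / 4) < 0) := by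
  simpa only [stabilityForm_shrinkerMeasure] using
    hyperplane_not_L_stable_general (shrinkerMeasure (EuclideanSpace ℝ (Fin n)))
      (c := 1 / 2) (δ := 1) (C := 2) (by norm_num) one_pos (by norm_num)
end

section
/- Let n ≥ 1 be an integer, let q : ℝⁿ → ℝ be continuous, and suppose u : ℝⁿ → ℝ is a smooth positive function satisfying Δu(x) − (1/2)⟨x, ∇u(x)⟩ + q(x) u(x) = 0 for all x. Then for every smooth compactly supported φ : ℝⁿ → ℝ one has ∫_{ℝⁿ} q(x) φ(x)² exp(−‖x‖²/4) dx ≤ ∫_{ℝⁿ} ‖∇φ(x)‖² exp(−‖x‖²/4) dx. -/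
open MeasureTheory RealInnerProductSpace

/-- The Euclidean Laplacian: the sum of the pure second partial derivatives
(equivalently, the trace of the second derivative). -/
noncomputable def eucLaplacian {m : ℕ} (f : EuclideanSpace ℝ (Fin m) → ℝ)
    (x : EuclideanSpace ℝ (Fin m)) : ℝ :=
  ∑ i, iteratedFDeriv ℝ 2 f x ![EuclideanSpace.single i 1, EuclideanSpace.single i 1]

/-!
Test the differential inequality `Δu - ⟨∇V, ∇u⟩ + q u ≤ 0` against `φ² / u` (Barta's trick). The
drift Laplacian `Δ - ⟨∇V, ∇·⟩` is symmetric for the weight `e^{-V}`, so integrating by parts gives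
`∫ q φ² e^{-V} ≤ ∫ ⟨∇(φ² / u), ∇u⟩ e^{-V}`, and Picone's identity
`⟨∇(φ² / u), ∇u⟩ = |∇φ|² - |∇φ - (φ / u) ∇u|²` finishes the proof. In terms of `w = log u`, this
integrates the divergence of `φ² e^{-V} ∇w`. The Gaussian weight is the case `V = |x|² / 4`.
-/

section

open scoped Gradient Laplacian

section GradientCalculus

variable {E : Type*} [NormedAddCommGroup E] [InnerProductSpace ℝ E] [CompleteSpace E]
  {f g : E → ℝ} {x : E}

lemma gradient_fun_mul (hf : DifferentiableAt ℝ f x) (hg : DifferentiableAt ℝ g x) :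
    ∇ (fun y ↦ f y * g y) x = f x • ∇ g x + g x • ∇ f x := by
  simp [gradient, fderiv_fun_mul hf hg]

lemma gradient_fun_comp {h : ℝ → ℝ} (hh : DifferentiableAt ℝ h (f x))
    (hf : DifferentiableAt ℝ f x) : ∇ (fun y ↦ h (f y)) x = deriv h (f x) • ∇ f x := by
  simp [gradient, (hh.hasDerivAt.comp_hasFDerivAt x hf.hasFDerivAt).fderiv, ← Function.comp_def h f]

lemma gradient_mul_exp_neg (hf : DifferentiableAt ℝ f x) (hg : DifferentiableAt ℝ g x) :
    ∇ (fun y ↦ f y * Real.exp (-g y)) x = Real.exp (-g x) • (∇ f x - f x • ∇ g x) := by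
  have hexp : ∇ (fun y ↦ Real.exp (-g y)) x = -Real.exp (-g x) • ∇ g x := by
    rw [gradient_fun_comp (h := fun t ↦ Real.exp (-t)) (by fun_prop) hg,
      (hasDerivAt_neg (g x)).exp.deriv, mul_neg_one]
  rw [gradient_fun_mul hf hg.fun_neg.exp, hexp]
  module

lemma gradient_sq_div (hf : DifferentiableAt ℝ f x) (hg : DifferentiableAt ℝ g x)
    (hgx : g x ≠ 0) :
    ∇ (fun y ↦ f y ^ 2 / g y) x = (2 * (f x / g x)) • ∇ f x - (f x / g x) ^ 2 • ∇ g x := by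
  have hsq : ∇ (fun y ↦ f y ^ 2) x = (2 * f x) • ∇ f x := by
    rw [gradient_fun_comp (h := fun t ↦ t ^ 2) (by fun_prop) hf]
    simp
  have hinv : ∇ (fun y ↦ (g y)⁻¹) x = -(g x ^ 2)⁻¹ • ∇ g x := by
    rw [gradient_fun_comp (differentiableAt_inv hgx) hg, deriv_inv]
  simp only [div_eq_mul_inv]
  rw [gradient_fun_mul (hf.fun_pow 2) (hg.fun_inv hgx), hsq, hinv]
  module

lemma inner_gradient_sq_div (hf : DifferentiableAt ℝ f x) (hg : DifferentiableAt ℝ g x)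
    (hgx : g x ≠ 0) :
    ⟪∇ (fun y ↦ f y ^ 2 / g y) x, ∇ g x⟫
      = ‖∇ f x‖ ^ 2 - ‖∇ f x - (f x / g x) • ∇ g x‖ ^ 2 := by
  rw [gradient_sq_div hf hg hgx, norm_sub_sq_real]
  simp only [inner_sub_left, real_inner_smul_left, real_inner_smul_right, norm_smul, mul_pow,
    real_inner_self_eq_norm_sq, Real.norm_eq_abs, sq_abs]
  ring

lemma continuous_gradient_s7 (hf : ContDiff ℝ 1 f) : Continuous (∇ f) :=
  (InnerProductSpace.toDual ℝ E).symm.continuous.comp (hf.continuous_fderiv one_ne_zero)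

lemma hasCompactSupport_gradient_s7 (hf : HasCompactSupport f) : HasCompactSupport (∇ f) :=
  (hf.fderiv ℝ).comp_left (map_zero (InnerProductSpace.toDual ℝ E).symm)

lemma inner_gradient_eq_sum_fderiv {ι : Type*} [Fintype ι] (b : OrthonormalBasis ι ℝ E)
    (f g : E → ℝ) (x : E) :
    ⟪∇ f x, ∇ g x⟫ = ∑ i, fderiv ℝ f x (b i) * fderiv ℝ g x (b i) := by
  rw [← b.sum_inner_mul_inner]
  exact Finset.sum_congr rfl fun i _ ↦ by
    rw [real_inner_comm (∇ g x), inner_gradient_left, inner_gradient_left]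

lemma gradient_norm_sq (x : E) : ∇ (fun y : E ↦ ‖y‖ ^ 2) x = (2 : ℝ) • x := by
  refine HasGradientAt.gradient (hasGradientAt_iff_hasFDerivAt.mpr
    ((hasStrictFDerivAt_norm_sq x).hasFDerivAt.congr_fderiv ?_))
  ext y
  simp

end GradientCalculus

lemma hasCompactSupport_sq_div {X : Type*} [TopologicalSpace X] {f : X → ℝ}
    (hf : HasCompactSupport f) (g : X → ℝ) : HasCompactSupport fun x ↦ f x ^ 2 / g x := by
  simp only [div_eq_mul_inv, pow_two, mul_assoc]
  exact hf.mul_right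

lemma integral_mul_fderiv_eq_neg_integral_fderiv_mul {E : Type*} [NormedAddCommGroup E]
    [NormedSpace ℝ E] [FiniteDimensional ℝ E] [MeasurableSpace E] [BorelSpace E] (μ : Measure E)
    [μ.IsAddHaarMeasure] {f g : E → ℝ} (hf : ContDiff ℝ 1 f) (hfsupp : HasCompactSupport f)
    (hg : ContDiff ℝ 1 g) (v : E) :
    ∫ x, f x * fderiv ℝ g x v ∂μ = -∫ x, fderiv ℝ f x v * g x ∂μ := by
  have hf' := (hf.continuous_fderiv one_ne_zero).clm_apply (continuous_const (y := v))
  have hg' := (hg.continuous_fderiv one_ne_zero).clm_apply (continuous_const (y := v))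
  exact integral_mul_fderiv_eq_neg_fderiv_mul_of_integrable
    ((hf'.mul hg.continuous).integrable_of_hasCompactSupport (hfsupp.fderiv_apply ℝ v).mul_right)
    ((hf.continuous.mul hg').integrable_of_hasCompactSupport hfsupp.mul_right)
    ((hf.continuous.mul hg.continuous).integrable_of_hasCompactSupport hfsupp.mul_right)
    (fun x _ ↦ hf.differentiable one_ne_zero x) (fun x _ ↦ hg.differentiable one_ne_zero x)

section DriftLaplacian

variable {E : Type*} [NormedAddCommGroup E] [InnerProductSpace ℝ E] [FiniteDimensional ℝ E]

/-- The drift Laplacian `Δ - ⟨∇V, ∇·⟩` with potential `V` (also called the weighted Laplacian); it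
is the symmetric operator of the Dirichlet form `∫ ⟨∇f, ∇g⟩ e^{-V}`. -/
noncomputable def driftLaplacian (V u : E → ℝ) (x : E) : ℝ :=
  Δ u x - ⟪∇ V x, ∇ u x⟫

variable {u V q ψ φ w : E → ℝ}

lemma laplacian_eq_sum_fderiv_fderiv {ι : Type*} [Fintype ι] (b : OrthonormalBasis ι ℝ E)
    {x : E} (hu : ContDiffAt ℝ 2 u x) :
    Δ u x = ∑ i, fderiv ℝ (fun y ↦ fderiv ℝ u y (b i)) x (b i) := by
  have hdu : DifferentiableAt ℝ (fderiv ℝ u) x :=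
    (hu.fderiv_right (m := 1) (by norm_num)).differentiableAt one_ne_zero
  simp [InnerProductSpace.laplacian_eq_iteratedFDeriv_orthonormalBasis u b,
    iteratedFDeriv_two_apply, fderiv_clm_apply hdu (differentiableAt_const _)]

lemma continuous_laplacian (hu : ContDiff ℝ 2 u) : Continuous (Δ u) := by
  rw [InnerProductSpace.laplacian_eq_iteratedFDeriv_stdOrthonormalBasis]
  have := hu.continuous_iteratedFDeriv (m := 2) le_rfl
  fun_prop

lemma continuous_driftLaplacian (hV : ContDiff ℝ 1 V) (hu : ContDiff ℝ 2 u) :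
    Continuous (driftLaplacian V u) :=
  (continuous_laplacian hu).sub
    ((continuous_gradient_s7 hV).inner (continuous_gradient_s7 (hu.of_le one_le_two)))

variable [MeasurableSpace E] [BorelSpace E] (μ : Measure E)

lemma integrable_inner_gradient_mul [IsFiniteMeasureOnCompacts μ] {f g : E → ℝ}
    (hf : ContDiff ℝ 1 f) (hfsupp : HasCompactSupport f) (hg : ContDiff ℝ 1 g)
    (hw : Continuous w) :
    Integrable (fun x ↦ ⟪∇ f x, ∇ g x⟫ * w x) μ := by
  have hcont := ((continuous_gradient_s7 hf).inner (𝕜 := ℝ) (continuous_gradient_s7 hg)).mul hw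
  refine hcont.integrable_of_hasCompactSupport
    ((hasCompactSupport_gradient_s7 hfsupp).mono fun x hx hzero ↦ hx ?_)
  simp [hzero]

lemma integral_inner_gradient_sq_div_mul_le [IsFiniteMeasureOnCompacts μ]
    (hu : ContDiff ℝ 1 u) (hupos : ∀ x, 0 < u x) (hw : Continuous w) (hwnonneg : ∀ x, 0 ≤ w x)
    (hφ : ContDiff ℝ 1 φ) (hφsupp : HasCompactSupport φ) :
    ∫ x, ⟪∇ (fun y ↦ φ y ^ 2 / u y) x, ∇ u x⟫ * w x ∂μ ≤ ∫ x, ‖∇ φ x‖ ^ 2 * w x ∂μ := by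
  have hψ : ContDiff ℝ 1 fun y ↦ φ y ^ 2 / u y := (hφ.pow 2).div hu fun x ↦ (hupos x).ne'
  have picone_le (x : E) : ⟪∇ (fun y ↦ φ y ^ 2 / u y) x, ∇ u x⟫ ≤ ‖∇ φ x‖ ^ 2 := by
    rw [inner_gradient_sq_div (hφ.differentiable one_ne_zero x)
      (hu.differentiable one_ne_zero x) (hupos x).ne']
    exact sub_le_self _ (sq_nonneg _)
  refine integral_mono
    (integrable_inner_gradient_mul μ hψ (hasCompactSupport_sq_div hφsupp u) hu hw) ?_
    fun x ↦ mul_le_mul_of_nonneg_right (picone_le x) (hwnonneg x)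
  simpa only [real_inner_self_eq_norm_sq] using integrable_inner_gradient_mul μ hφ hφsupp hφ hw

variable [μ.IsAddHaarMeasure]

theorem integral_mul_laplacian (hψ : ContDiff ℝ 1 ψ) (hψsupp : HasCompactSupport ψ)
    (hu : ContDiff ℝ 2 u) :
    ∫ x, ψ x * Δ u x ∂μ = -∫ x, ⟪∇ ψ x, ∇ u x⟫ ∂μ := by
  let b := stdOrthonormalBasis ℝ E
  have hdu (i) : ContDiff ℝ 1 fun y ↦ fderiv ℝ u y (b i) :=
    (hu.fderiv_right (by norm_num)).clm_apply contDiff_const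
  have hψ_ddu (i) : Integrable (fun x ↦ ψ x * fderiv ℝ (fun y ↦ fderiv ℝ u y (b i)) x (b i)) μ :=
    (hψ.continuous.mul (((hdu i).continuous_fderiv one_ne_zero).clm_apply
      continuous_const)).integrable_of_hasCompactSupport hψsupp.mul_right
  have hdψ_du (i) : Integrable (fun x ↦ fderiv ℝ ψ x (b i) * fderiv ℝ u x (b i)) μ :=
    (((hψ.continuous_fderiv one_ne_zero).clm_apply continuous_const).mul
      (hdu i).continuous).integrable_of_hasCompactSupport (hψsupp.fderiv_apply ℝ (b i)).mul_right
  simp only [laplacian_eq_sum_fderiv_fderiv b hu.contDiffAt, inner_gradient_eq_sum_fderiv b,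
    Finset.mul_sum]
  rw [integral_finsetSum _ fun i _ ↦ hψ_ddu i, integral_finsetSum _ fun i _ ↦ hdψ_du i,
    ← Finset.sum_neg_distrib]
  exact Finset.sum_congr rfl fun i _ ↦
    integral_mul_fderiv_eq_neg_integral_fderiv_mul μ hψ hψsupp (hdu i) (b i)

theorem integral_mul_driftLaplacian_mul_exp_neg (hV : ContDiff ℝ 1 V) (hψ : ContDiff ℝ 1 ψ)
    (hψsupp : HasCompactSupport ψ) (hu : ContDiff ℝ 2 u) :
    ∫ x, ψ x * driftLaplacian V u x * Real.exp (-V x) ∂μ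
      = -∫ x, ⟪∇ ψ x, ∇ u x⟫ * Real.exp (-V x) ∂μ := by
  have hu₁ : ContDiff ℝ 1 u := hu.of_le one_le_two
  have hexp : ContDiff ℝ 1 fun x ↦ Real.exp (-V x) := hV.neg.exp
  have hχ : Continuous fun x ↦ ψ x * Real.exp (-V x) := hψ.continuous.mul hexp.continuous
  have hlap : Integrable (fun x ↦ ψ x * Real.exp (-V x) * Δ u x) μ :=
    (hχ.mul (continuous_laplacian hu)).integrable_of_hasCompactSupport hψsupp.mul_right.mul_right
  have hdrift : Integrable (fun x ↦ ψ x * Real.exp (-V x) * ⟪∇ V x, ∇ u x⟫) μ :=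
    (hχ.mul ((continuous_gradient_s7 hV).inner (continuous_gradient_s7 hu₁)))
      |>.integrable_of_hasCompactSupport hψsupp.mul_right.mul_right
  have hdir := integrable_inner_gradient_mul μ hψ hψsupp hu₁ hexp.continuous
  have hgrad (x : E) : ⟪∇ (fun y ↦ ψ y * Real.exp (-V y)) x, ∇ u x⟫
      = ⟪∇ ψ x, ∇ u x⟫ * Real.exp (-V x) - ψ x * Real.exp (-V x) * ⟪∇ V x, ∇ u x⟫ := by
    rw [gradient_mul_exp_neg (hψ.differentiable one_ne_zero x) (hV.differentiable one_ne_zero x)]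
    simp only [real_inner_smul_left, inner_sub_left]
    ring
  have hgreen := integral_mul_laplacian μ (hψ.mul hexp) hψsupp.mul_right hu
  simp only [hgrad] at hgreen
  rw [integral_sub hdir hdrift] at hgreen
  calc ∫ x, ψ x * driftLaplacian V u x * Real.exp (-V x) ∂μ
      = ∫ x, (ψ x * Real.exp (-V x) * Δ u x - ψ x * Real.exp (-V x) * ⟪∇ V x, ∇ u x⟫) ∂μ := by
        simp only [driftLaplacian]
        congr with x
        ring
    _ = -∫ x, ⟪∇ ψ x, ∇ u x⟫ * Real.exp (-V x) ∂μ := by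
        rw [integral_sub hlap hdrift, hgreen]
        ring

lemma integral_mul_sq_mul_exp_neg_le (hV : ContDiff ℝ 1 V) (hq : LocallyIntegrable q μ)
    (hu : ContDiff ℝ 2 u) (hupos : ∀ x, 0 < u x)
    (hsuper : ∀ x, driftLaplacian V u x + q x * u x ≤ 0)
    (hφ : ContDiff ℝ 1 φ) (hφsupp : HasCompactSupport φ) :
    ∫ x, q x * φ x ^ 2 * Real.exp (-V x) ∂μ
      ≤ ∫ x, ⟪∇ (fun y ↦ φ y ^ 2 / u y) x, ∇ u x⟫ * Real.exp (-V x) ∂μ := by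
  have hψ : ContDiff ℝ 1 fun y ↦ φ y ^ 2 / u y :=
    (hφ.pow 2).div (hu.of_le one_le_two) fun x ↦ (hupos x).ne'
  have hψsupp := hasCompactSupport_sq_div hφsupp u
  have hexp : Continuous fun x ↦ Real.exp (-V x) := hV.continuous.neg.rexp
  have hqφ : Integrable (fun x ↦ q x * φ x ^ 2 * Real.exp (-V x)) μ := by
    simp only [mul_assoc, pow_two]
    exact hq.integrable_smul_right_of_hasCompactSupport
      (hφ.continuous.mul (hφ.continuous.mul hexp)) hφsupp.mul_right
  have hψL : Integrable (fun x ↦ φ x ^ 2 / u x * driftLaplacian V u x * Real.exp (-V x)) μ :=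
    ((hψ.continuous.mul (continuous_driftLaplacian hV hu)).mul hexp)
      |>.integrable_of_hasCompactSupport hψsupp.mul_right.mul_right
  have htest (x : E) : q x * φ x ^ 2 ≤ -(φ x ^ 2 / u x * driftLaplacian V u x) := by
    have hqu : q x * u x ≤ -driftLaplacian V u x := by linarith [hsuper x]
    calc q x * φ x ^ 2 = φ x ^ 2 / u x * (q x * u x) := by field_simp [(hupos x).ne']
      _ ≤ φ x ^ 2 / u x * -driftLaplacian V u x :=
        mul_le_mul_of_nonneg_left hqu (div_nonneg (sq_nonneg _) (hupos x).le)
      _ = -(φ x ^ 2 / u x * driftLaplacian V u x) := mul_neg _ _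
  calc ∫ x, q x * φ x ^ 2 * Real.exp (-V x) ∂μ
      ≤ ∫ x, -(φ x ^ 2 / u x * driftLaplacian V u x * Real.exp (-V x)) ∂μ :=
        integral_mono hqφ hψL.neg fun x ↦
          (mul_le_mul_of_nonneg_right (htest x) (Real.exp_pos _).le).trans_eq (neg_mul _ _)
    _ = ∫ x, ⟪∇ (fun y ↦ φ y ^ 2 / u y) x, ∇ u x⟫ * Real.exp (-V x) ∂μ := by
        rw [integral_neg, integral_mul_driftLaplacian_mul_exp_neg μ hV hψ hψsupp hu, neg_neg]

theorem stability_from_positive_solution_general (hV : ContDiff ℝ 1 V)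
    (hq : LocallyIntegrable q μ) (hu : ContDiff ℝ 2 u) (hupos : ∀ x, 0 < u x)
    (hsuper : ∀ x, driftLaplacian V u x + q x * u x ≤ 0)
    (hφ : ContDiff ℝ 1 φ) (hφsupp : HasCompactSupport φ) :
    ∫ x, q x * φ x ^ 2 * Real.exp (-V x) ∂μ ≤ ∫ x, ‖∇ φ x‖ ^ 2 * Real.exp (-V x) ∂μ :=
  (integral_mul_sq_mul_exp_neg_le μ hV hq hu hupos hsuper hφ hφsupp).trans
    (integral_inner_gradient_sq_div_mul_le μ (hu.of_le one_le_two) hupos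
      hV.continuous.neg.rexp (fun x ↦ (Real.exp_pos (-V x)).le) hφ hφsupp)

end DriftLaplacian

lemma eucLaplacian_eq_laplacian {n : ℕ} (u : EuclideanSpace ℝ (Fin n) → ℝ) :
    eucLaplacian u = Δ u := by
  rw [InnerProductSpace.laplacian_eq_iteratedFDeriv_orthonormalBasis u
    (EuclideanSpace.basisFun (Fin n) ℝ)]
  simp [funext_iff, eucLaplacian]

lemma driftLaplacian_norm_sq_div_four {n : ℕ} (u : EuclideanSpace ℝ (Fin n) → ℝ)
    (x : EuclideanSpace ℝ (Fin n)) :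
    driftLaplacian (fun y ↦ ‖y‖ ^ 2 / 4) u x = eucLaplacian u x - 1 / 2 * ⟪x, ∇ u x⟫ := by
  have hgrad : ∇ (fun y : EuclideanSpace ℝ (Fin n) ↦ ‖y‖ ^ 2 / 4) x = (1 / 2 : ℝ) • x := by
    rw [gradient_fun_comp (h := fun t ↦ t / 4) (by fun_prop)
      ((contDiff_norm_sq ℝ).differentiable one_ne_zero x), gradient_norm_sq, deriv_div_const,
      deriv_id'']
    module
  rw [driftLaplacian, hgrad, real_inner_smul_left, eucLaplacian_eq_laplacian]

end

/-- Fischer-Colbrie–Schoen-type stability: if `u > 0` is smooth and solves the drift equation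
`Δu − (1/2)⟨x, ∇u⟩ + q u = 0` with `q` continuous, then for every smooth compactly supported
`φ` one has `∫ q φ² e^{−‖x‖²/4} ≤ ∫ ‖∇φ‖² e^{−‖x‖²/4}`. -/
theorem stability_from_positive_solution (n : ℕ) (hn : 1 ≤ n)
    (q : EuclideanSpace ℝ (Fin n) → ℝ) (hq : Continuous q)
    (u : EuclideanSpace ℝ (Fin n) → ℝ) (hu : ContDiff ℝ (⊤ : ℕ∞) u) (hupos : ∀ x, 0 < u x)
    (heq : ∀ x, eucLaplacian u x - (1 / 2) * ⟪x, gradient u x⟫ + q x * u x = 0)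
    (φ : EuclideanSpace ℝ (Fin n) → ℝ) (hφ : ContDiff ℝ (⊤ : ℕ∞) φ) (hφsupp : HasCompactSupport φ) :
    ∫ x, q x * φ x ^ 2 * Real.exp (-‖x‖ ^ 2 / 4)
      ≤ ∫ x, ‖gradient φ x‖ ^ 2 * Real.exp (-‖x‖ ^ 2 / 4) := by
  simp only [← driftLaplacian_norm_sq_div_four] at heq
  simpa only [neg_div] using stability_from_positive_solution_general volume
    ((contDiff_norm_sq ℝ).div_const 4) hq.locallyIntegrable (hu.of_le (by norm_cast)) hupos
    (fun x ↦ (heq x).le) (hφ.of_le (by norm_cast)) hφsupp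
end
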